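/- Let α be a strongly continuous one-parameter isometric representation on a Banach space E, K a dense subset of E, and R ⊆ (0,∞) a set having ∞ as a limit point. Let C be the linear span of { a(r) : a ∈ K, r ∈ R }, where a(r) = (r/√π)∫ exp(-r²t²) α_t(a) dt. Then for every z ∈ ℂ, C is a core for the closed operator α_z. -/

import Mathlib

open Complex MeasureTheory Filter Topology Set

noncomputable section

/-- The closed horizontal strip between the real axis and the line `Im = z.im`. -/
def hStrip (z : ℂ) : Set ℂ := {y : ℂ | y.im ∈ Set.uIcc 0 z.im}

/-- A strongly continuous one-parameter (contractive, hence isometric) representation. -/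
structure IsOneParamRep {E : Type*} [NormedAddCommGroup E] [NormedSpace ℂ E]
    (α : ℝ → E →L[ℂ] E) : Prop where
  map_add : ∀ s t : ℝ, α (s + t) = (α s).comp (α t)
  map_zero : α 0 = ContinuousLinearMap.id ℂ E
  norm_le : ∀ t : ℝ, ‖α t‖ ≤ 1
  strong_cont : ∀ a : E, Continuous fun t : ℝ => α t a

/-- `(a, b)` lies in the graph of the analytic continuation `α_z`:  there is a function `f`,
continuous on the strip `S(z)`, analytic in its interior, agreeing with `t ↦ α_t a` on `ℝ`,
with `f z = b`. -/
def HasContVal {E : Type*} [NormedAddCommGroup E] [NormedSpace ℂ E]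
    (α : ℝ → E →L[ℂ] E) (z : ℂ) (a b : E) : Prop :=
  ∃ f : ℂ → E, ContinuousOn f (hStrip z) ∧
    DifferentiableOn ℂ f (interior (hStrip z)) ∧
    (∀ t : ℝ, f t = α t a) ∧ f z = b

/-- The smeared element `a(r) = (r/√π) ∫ exp (-r²(t-z)²) α_t a dt` (here with `z = 0`). -/
def smear {E : Type*} [NormedAddCommGroup E] [NormedSpace ℂ E]
    (α : ℝ → E →L[ℂ] E) (a : E) (r : ℝ) (z : ℂ) : E :=
  ((r / Real.sqrt Real.pi : ℝ) : ℂ) •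
    ∫ t : ℝ, Complex.exp (-(r : ℂ) ^ 2 * ((t : ℂ) - z) ^ 2) • α t a

/-! Smearing against the Gaussian kernel centred at `w ∈ ℂ` is a bounded operator depending
holomorphically on `w`, and for `w ∈ ℝ` it is `α_w` applied to smearing at `0`. So `a(r)` lies in
the domain of every `α_z`, the operator `a ↦ α_z (a(r))` is bounded, and for `a` in the domain of
`α_z` uniqueness of analytic continuation gives `α_z (a(r)) = (α_z a)(r)`. As `r → ∞` along `R`,
`(a(r), α_z (a(r)))` therefore tends to `(a, α_z a)`, and by boundedness `a` may be replaced by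
elements of `K`.

It remains to see that the graph of `α_z` is closed. An extended orbit commutes with real
translations, so it is bounded on the strip, and the three lines theorem bounds it by its values at
`0` and `z`; hence convergence in the graph forces uniform convergence of the extensions. -/

section VanishingOnTheAxis

variable {E : Type*} [NormedAddCommGroup E] [NormedSpace ℂ E]

lemma diffContOnCl_comp_I_mul {f : ℂ → E} {s : ℝ}
    (hf : DiffContOnCl ℂ f (Ioo (-s) s ×ℂ Ioo (-s) s)) :
    DiffContOnCl ℂ (fun w ↦ f (I * w)) (Ioo (-s) s ×ℂ Ioo (-s) s) := by
  have hI : Differentiable ℂ fun w : ℂ ↦ I * w := by fun_prop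
  refine hf.comp hI.diffContOnCl fun w hw ↦ ?_
  simp only [mem_reProdIm, mem_Ioo, I_mul_re, I_mul_im] at hw ⊢
  constructor <;> constructor <;> linarith

/-- The four rotations of `f` about the centre each vanish on a different side of the square, so
their product vanishes on its whole boundary. -/
lemma eq_zero_of_eqOn_zero_side {f : ℂ → ℂ} {s : ℝ} (hs : 0 < s)
    (hf : DiffContOnCl ℂ f (Ioo (-s) s ×ℂ Ioo (-s) s))
    (hside : EqOn f 0 (Icc (-s) s ×ℂ {-s})) : f 0 = 0 := by
  have hf₁ := diffContOnCl_comp_I_mul hf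
  have hf₂ := diffContOnCl_comp_I_mul hf₁
  have hf₃ := diffContOnCl_comp_I_mul hf₂
  have hvanish : EqOn (fun w ↦ (f w • f (I * w)) • f (I * (I * w)) • f (I * (I * (I * w))))
      (fun _ ↦ 0) (frontier (Ioo (-s) s ×ℂ Ioo (-s) s)) := by
    have hside' : ∀ w : ℂ, w.re ∈ Icc (-s) s → w.im = -s → f w = 0 :=
      fun w hre him ↦ hside ⟨hre, him⟩
    have hss : -s < s := neg_lt_self hs
    rintro w hw
    rw [frontier_reProdIm, closure_Ioo hss.ne, frontier_Ioo hss] at hw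
    obtain ⟨hre, him | him⟩ | ⟨hre | hre, him⟩ := hw
    · simp [hside' w hre him]
    · simp [hside' (I * (I * w)) (by simpa [neg_le, and_comm] using hre) (by simpa using him)]
    · simp [hside' (I * w) (by simpa [neg_le, and_comm] using him) (by simpa using hre)]
    · simp [hside' (I * (I * (I * w))) (by simpa using him) (by simpa using hre)]
  have hzero := eqOn_of_eqOn_frontier ((Metric.isBounded_Ioo _ _).reProdIm
    (Metric.isBounded_Ioo _ _)) ((hf.smul hf₁).smul (hf₂.smul hf₃)) diffContOnCl_const hvanish
    (x := 0) (by simp [mem_reProdIm, hs])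
  simpa using hzero

end VanishingOnTheAxis

section Strip

variable {E : Type*} [NormedAddCommGroup E] [NormedSpace ℂ E] {f g : ℂ → E} {z w : ℂ}

lemma interior_hStrip (z : ℂ) : interior (hStrip z) = im ⁻¹' uIoo 0 z.im := by
  change interior (im ⁻¹' Icc (min 0 z.im) (max 0 z.im)) = _
  rw [interior_preimage_im, interior_Icc]
  rfl

lemma self_mem_hStrip (z : ℂ) : z ∈ hStrip z := right_mem_uIcc

lemma ofReal_mem_hStrip (z : ℂ) (t : ℝ) : (t : ℂ) ∈ hStrip z := left_mem_uIcc

lemma preimage_neg_hStrip (z : ℂ) : Neg.neg ⁻¹' hStrip z = hStrip (-z) := by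
  ext w
  simp only [hStrip, mem_preimage, mem_ofPred_eq, mem_uIcc, neg_im]
  constructor <;> rintro (h | h) <;> [right; left; right; left] <;> constructor <;> linarith

/-- Continuity on the closed strip `hStrip z` and holomorphy in its interior. This is not
`DiffContOnCl ℂ f (interior (hStrip z))`, which is vacuous when `z` is real. -/
structure StripHolomorphic (z : ℂ) (f : ℂ → E) : Prop where
  continuousOn : ContinuousOn f (hStrip z)
  differentiableOn : DifferentiableOn ℂ f (interior (hStrip z))

namespace StripHolomorphic

lemma sub (hf : StripHolomorphic z f) (hg : StripHolomorphic z g) : StripHolomorphic z (f - g) :=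
  ⟨hf.continuousOn.sub hg.continuousOn, hf.differentiableOn.sub hg.differentiableOn⟩

lemma clm_comp {F : Type*} [NormedAddCommGroup F] [NormedSpace ℂ F] (hf : StripHolomorphic z f)
    (T : E →L[ℂ] F) : StripHolomorphic z fun w ↦ T (f w) :=
  ⟨T.continuous.comp_continuousOn hf.continuousOn,
    T.differentiable.comp_differentiableOn hf.differentiableOn⟩

lemma comp_add_ofReal (hf : StripHolomorphic z f) (t : ℝ) :
    StripHolomorphic z fun w ↦ f (w + t) where
  continuousOn := hf.continuousOn.comp (by fun_prop) fun w hw ↦ by simpa [hStrip] using hw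
  differentiableOn := hf.differentiableOn.comp (by fun_prop) fun w hw ↦ by
    simpa [interior_hStrip] using hw

lemma comp_neg (hf : StripHolomorphic z f) : StripHolomorphic (-z) fun w ↦ f (-w) where
  continuousOn := hf.continuousOn.comp continuousOn_neg (preimage_neg_hStrip z).ge
  differentiableOn := hf.differentiableOn.comp differentiable_neg.differentiableOn <| by
    rw [← preimage_neg_hStrip]
    exact ((Homeomorph.neg ℂ).preimage_interior _).ge

lemma eq_zero_of_im_le_half {f : ℂ → ℂ} (hf : StripHolomorphic z f) (h0 : ∀ t : ℝ, f t = 0)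
    (hw : 0 < w.im) (hwz : w.im ≤ z.im / 2) : f w = 0 := by
  have hcl : closure (Ioo (-w.im) w.im ×ℂ Ioo (-w.im) w.im) =
      Icc (-w.im) w.im ×ℂ Icc (-w.im) w.im := by
    rw [closure_reProdIm, closure_Ioo (neg_lt_self hw).ne]
  have hsquare : DiffContOnCl ℂ (fun v ↦ f (w + v)) (Ioo (-w.im) w.im ×ℂ Ioo (-w.im) w.im) := by
    refine ⟨hf.differentiableOn.comp (by fun_prop) fun v ⟨_, hlo, hhi⟩ ↦ ?_,
      hf.continuousOn.comp (by fun_prop) fun v hv ↦ ?_⟩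
    · rw [interior_hStrip, mem_preimage, uIoo_of_le (by linarith), add_im]
      constructor <;> linarith
    · obtain ⟨-, hlo, hhi⟩ := hcl ▸ hv
      rw [hStrip, mem_ofPred_eq, uIcc_of_le (by linarith), add_im]
      constructor <;> linarith
  have hside : EqOn (fun v ↦ f (w + v)) 0 (Icc (-w.im) w.im ×ℂ {-w.im}) := fun v ⟨_, hv⟩ ↦ by
    have him : v.im = -w.im := hv
    have hreal : w + v = ((w + v).re : ℂ) := Complex.ext rfl (by simp [him])
    change f (w + v) = 0
    rw [hreal, h0]
  simpa using eq_zero_of_eqOn_zero_side hw hsquare hside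

lemma eqOn_zero_of_im_pos {f : ℂ → ℂ} (hz : 0 < z.im) (hf : StripHolomorphic z f)
    (h0 : ∀ t : ℝ, f t = 0) : EqOn f 0 (hStrip z) := by
  have hint : interior (hStrip z) = im ⁻¹' Ioo 0 z.im := by
    rw [interior_hStrip, uIoo_of_le hz.le]
  have hpre : IsPreconnected (interior (hStrip z)) :=
    hint ▸ ((convex_Ioo 0 z.im).linear_preimage imLm).isPreconnected
  have hnear : im ⁻¹' Ioo 0 (z.im / 2) ∈ 𝓝 (z / 4) :=
    (isOpen_Ioo.preimage continuous_im).mem_nhds (by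
      simp only [mem_preimage, div_ofNat_im]
      constructor <;> linarith)
  have hmem : z / 4 ∈ interior (hStrip z) := by
    rw [hint, mem_preimage, div_ofNat_im]
    constructor <;> linarith
  have hanalytic := hf.differentiableOn.analyticOnNhd isOpen_interior
  have hinterior : EqOn f 0 (interior (hStrip z)) :=
    hanalytic.eqOn_zero_of_preconnected_of_eventuallyEq_zero hpre hmem
      (mem_of_superset hnear fun w hw ↦ hf.eq_zero_of_im_le_half h0 hw.1 hw.2.le)
  refine hinterior.of_subset_closure hf.continuousOn continuousOn_const interior_subset ?_
  rw [hint, closure_preimage_im, closure_Ioo hz.ne, hStrip, uIcc_of_le hz.le]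
  rfl

lemma eqOn_zero (hf : StripHolomorphic z f) (h0 : ∀ t : ℝ, f t = 0) : EqOn f 0 (hStrip z) := by
  wlog hz : 0 ≤ z.im generalizing z f
  · intro w hw
    have hneg := this hf.comp_neg (fun t ↦ by simpa using h0 (-t)) (by simpa using (not_le.1 hz).le)
    have hw' : -w ∈ hStrip (-z) := by rwa [← preimage_neg_hStrip, mem_preimage, neg_neg]
    simpa using hneg hw'
  obtain hz | hz := hz.eq_or_lt
  · intro w hw
    have hreal : w = (w.re : ℂ) := Complex.ext rfl (by simpa [hStrip, ← hz] using hw)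
    rw [hreal, h0, Pi.zero_apply]
  · exact fun w hw ↦ SeparatingDual.eq_zero_of_forall_dual_eq_zero (R := ℂ) fun φ ↦
      eqOn_zero_of_im_pos hz (hf.clm_comp φ) (fun t ↦ by rw [h0, map_zero]) hw

lemma eqOn (hf : StripHolomorphic z f) (hg : StripHolomorphic z g)
    (h : ∀ t : ℝ, f t = g t) : EqOn f g (hStrip z) := fun _ hw ↦
  sub_eq_zero.1 ((hf.sub hg).eqOn_zero (fun t ↦ sub_eq_zero.2 (h t)) hw)

lemma norm_le_of_bounded {M C : ℝ} (hf : StripHolomorphic z f)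
    (hM : ∀ w ∈ hStrip z, ‖f w‖ ≤ M) (h0 : ∀ w : ℂ, w.im = 0 → ‖f w‖ ≤ C)
    (hz : ∀ w : ℂ, w.im = z.im → ‖f w‖ ≤ C) (hw : w ∈ hStrip z) : ‖f w‖ ≤ C := by
  obtain hz0 | hz0 := eq_or_ne 0 z.im
  · exact h0 w (by simpa [hStrip, ← hz0] using hw)
  have hlt : min 0 z.im < max 0 z.im := min_lt_max.2 hz0
  have hedge : ∀ y, y = 0 ∨ y = z.im → ∀ w : ℂ, w.im = y → ‖f w‖ ≤ C := by
    rintro y (rfl | rfl)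
    exacts [h0, hz]
  have hint : interior (hStrip z) = im ⁻¹' Ioo (min 0 z.im) (max 0 z.im) := interior_hStrip z
  refine PhragmenLindelof.horizontal_strip ⟨hint ▸ hf.differentiableOn, ?_⟩
    ⟨0, div_pos Real.pi_pos (sub_pos.2 hlt), 0, ?_⟩ (hedge _ (min_choice _ _))
    (hedge _ (max_choice _ _)) hw.1 hw.2
  · rw [closure_preimage_im, closure_Ioo hlt.ne]
    exact hf.continuousOn
  · refine .of_bound M (.filter_mono inf_le_right (eventually_principal.2 fun v hv ↦ ?_))
    simpa using hM v (Ioo_subset_Icc_self hv)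

end StripHolomorphic

end Strip

section AnalyticContinuation

variable {E : Type*} [NormedAddCommGroup E] [NormedSpace ℂ E] {α : ℝ → E →L[ℂ] E}

namespace IsOneParamRep

lemma map_add_apply (hα : IsOneParamRep α) (s t : ℝ) (a : E) : α (s + t) a = α s (α t a) := by
  rw [hα.map_add, ContinuousLinearMap.comp_apply]

lemma apply_comm (hα : IsOneParamRep α) (s t : ℝ) (a : E) : α s (α t a) = α t (α s a) := by
  rw [← hα.map_add_apply, add_comm, hα.map_add_apply]

lemma norm_apply_le (hα : IsOneParamRep α) (t : ℝ) (a : E) : ‖α t a‖ ≤ ‖a‖ := by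
  simpa using (α t).le_of_opNorm_le (hα.norm_le t) a

end IsOneParamRep

/-- `f` is an analytic extension to the strip `hStrip z` of the orbit `t ↦ α_t a`, so that
`f z = α_z a`. -/
structure ExtendsOrbit (α : ℝ → E →L[ℂ] E) (z : ℂ) (a : E) (f : ℂ → E) : Prop
    extends StripHolomorphic z f where
  apply_ofReal : ∀ t : ℝ, f t = α t a

lemma hasContVal_iff {z : ℂ} {a b : E} :
    HasContVal α z a b ↔ ∃ f : ℂ → E, ExtendsOrbit α z a f ∧ f z = b :=
  ⟨fun ⟨f, hc, hd, hf, hfz⟩ ↦ ⟨f, ⟨⟨hc, hd⟩, hf⟩, hfz⟩,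
    fun ⟨f, ⟨⟨hc, hd⟩, hf⟩, hfz⟩ ↦ ⟨f, hc, hd, hf, hfz⟩⟩

namespace ExtendsOrbit

variable {z w v : ℂ} {a b : E} {f g : ℂ → E}

lemma sub (hf : ExtendsOrbit α z a f) (hg : ExtendsOrbit α z b g) :
    ExtendsOrbit α z (a - b) (f - g) :=
  ⟨hf.toStripHolomorphic.sub hg.toStripHolomorphic, fun t ↦ by
    simp [hf.apply_ofReal, hg.apply_ofReal]⟩

lemma eqOn (hf : ExtendsOrbit α z a f) (hg : ExtendsOrbit α z a g) : EqOn f g (hStrip z) :=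
  hf.toStripHolomorphic.eqOn hg.toStripHolomorphic fun t ↦ by
    rw [hf.apply_ofReal, hg.apply_ofReal]

lemma apply_add_ofReal (hα : IsOneParamRep α) (hf : ExtendsOrbit α z a f) (hw : w ∈ hStrip z)
    (t : ℝ) : f (w + t) = α t (f w) := by
  refine (hf.comp_add_ofReal t).eqOn (hf.clm_comp (α t)) (fun s ↦ ?_) hw
  rw [← ofReal_add, hf.apply_ofReal, hf.apply_ofReal, add_comm, hα.map_add_apply]

lemma norm_le_of_im_eq (hα : IsOneParamRep α) (hf : ExtendsOrbit α z a f) (hw : w ∈ hStrip z)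
    (hvw : v.im = w.im) : ‖f v‖ ≤ ‖f w‖ := by
  have hv : v = w + ((v.re - w.re : ℝ) : ℂ) := Complex.ext (by simp) (by simp [hvw])
  rw [hv, hf.apply_add_ofReal hα hw]
  exact hα.norm_apply_le _ _

lemma exists_norm_le (hα : IsOneParamRep α) (hf : ExtendsOrbit α z a f) :
    ∃ M, ∀ w ∈ hStrip z, ‖f w‖ ≤ M := by
  have hmem : ∀ y ∈ uIcc 0 z.im, I * (y : ℂ) ∈ hStrip z := fun y hy ↦ by simpa [hStrip] using hy
  obtain ⟨M, hM⟩ := isCompact_uIcc.exists_bound_of_continuousOn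
    (hf.continuousOn.comp (by fun_prop : ContinuousOn (fun y : ℝ ↦ I * (y : ℂ)) _) hmem)
  exact ⟨M, fun w hw ↦ (hf.norm_le_of_im_eq hα (hmem w.im hw) (by simp)).trans (hM w.im hw)⟩

lemma norm_le (hα : IsOneParamRep α) (hf : ExtendsOrbit α z a f) (hw : w ∈ hStrip z) :
    ‖f w‖ ≤ max ‖a‖ ‖f z‖ := by
  obtain ⟨M, hM⟩ := hf.exists_norm_le hα
  have hf0 : f (0 : ℝ) = a := by
    rw [hf.apply_ofReal, hα.map_zero, ContinuousLinearMap.id_apply]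
  refine hf.norm_le_of_bounded hM (fun v hv ↦ ?_) (fun v hv ↦ ?_) hw
  · have hva := hf.norm_le_of_im_eq hα (ofReal_mem_hStrip z 0) (hv.trans (ofReal_im 0).symm)
    exact le_max_of_le_left (hf0 ▸ hva)
  · exact le_max_of_le_right (hf.norm_le_of_im_eq hα (self_mem_hStrip z) hv)

lemma dist_le (hα : IsOneParamRep α) (hf : ExtendsOrbit α z a f) (hg : ExtendsOrbit α z b g)
    (hw : w ∈ hStrip z) : dist (f w) (g w) ≤ dist (a, f z) (b, g z) := by
  rw [Prod.dist_eq, dist_eq_norm, dist_eq_norm, dist_eq_norm]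
  exact (hf.sub hg).norm_le hα hw

lemma of_tendstoUniformlyOn [CompleteSpace E] {ι : Type*} {l : Filter ι} [l.NeBot]
    {F : ι → ℂ → E} {c : ι → E} (hF : ∀ i, ExtendsOrbit α z (c i) (F i))
    (hf : TendstoUniformlyOn F f l (hStrip z)) (hc : Tendsto c l (𝓝 a)) : ExtendsOrbit α z a f where
  continuousOn := hf.continuousOn (.of_forall fun i ↦ (hF i).continuousOn)
  differentiableOn := (hf.mono interior_subset).tendstoLocallyUniformlyOn.differentiableOn
    (.of_forall fun i ↦ (hF i).differentiableOn) isOpen_interior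
  apply_ofReal t := by
    refine tendsto_nhds_unique (hf.tendsto_at (ofReal_mem_hStrip z t)) ?_
    simp only [(hF _).apply_ofReal]
    exact ((α t).continuous.tendsto a).comp hc

end ExtendsOrbit

lemma HasContVal.unique {z : ℂ} {a b c : E} (hb : HasContVal α z a b)
    (hc : HasContVal α z a c) : b = c := by
  obtain ⟨f, hf, rfl⟩ := hasContVal_iff.1 hb
  obtain ⟨g, hg, rfl⟩ := hasContVal_iff.1 hc
  exact hf.eqOn hg (self_mem_hStrip z)

theorem IsOneParamRep.isClosed_setOf_hasContVal [CompleteSpace E] (hα : IsOneParamRep α) (z : ℂ) :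
    IsClosed {p : E × E | HasContVal α z p.1 p.2} := by
  refine IsSeqClosed.isClosed fun p q hp hpq ↦ ?_
  choose F hF hFz using fun n ↦ hasContVal_iff.1 (hp n)
  have hdist : ∀ m n, ∀ w ∈ hStrip z, dist (F m w) (F n w) ≤ dist (p m) (p n) := fun m n w hw ↦ by
    simpa only [hFz] using (hF m).dist_le hα (hF n) hw
  have hcauchy : UniformCauchySeqOn F atTop (hStrip z) := by
    refine Metric.uniformCauchySeqOn_iff.2 fun ε hε ↦ ?_
    obtain ⟨N, hN⟩ := Metric.cauchySeq_iff.1 hpq.cauchySeq ε hε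
    exact ⟨N, fun m hm n hn w hw ↦ (hdist m n w hw).trans_lt (hN m hm n hn)⟩
  have hlim : TendstoUniformlyOn F (fun w ↦ limUnder atTop (F · w)) atTop (hStrip z) :=
    hcauchy.tendstoUniformlyOn_of_tendsto fun w hw ↦ (hcauchy.cauchySeq hw).tendsto_limUnder
  refine hasContVal_iff.2 ⟨_, .of_tendstoUniformlyOn hF hlim hpq.fst_nhds, ?_⟩
  refine tendsto_nhds_unique (hlim.tendsto_at (self_mem_hStrip z)) ?_
  simpa only [hFz] using hpq.snd_nhds

end AnalyticContinuation

section ParametricIntegrals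

variable {E : Type*} [NormedAddCommGroup E] [NormedSpace ℂ E]

/-- Cauchy's estimate turns the bound on the integrand into one on its derivative. -/
lemma differentiable_integral_of_norm_le_on_closedBall {X : Type*} [MeasurableSpace X]
    {μ : Measure X} {F : ℂ → X → E} (hmeas : ∀ w, AEStronglyMeasurable (F w) μ)
    (hdiff : ∀ x, Differentiable ℂ (F · x))
    (hbound : ∀ R : ℝ, ∃ B : X → ℝ, Integrable B μ ∧ ∀ w, ‖w‖ ≤ R → ∀ x, ‖F w x‖ ≤ B x) :
    Differentiable ℂ fun w ↦ ∫ x, F w x ∂μ := by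
  intro c
  obtain ⟨B, hB, hFB⟩ := hbound (‖c‖ + 2)
  have hderiv : ∀ x, ∀ w ∈ Metric.ball c 1, ‖deriv (F · x) w‖ ≤ B x := fun x w hw ↦ by
    refine (norm_deriv_le_of_forall_mem_sphere_norm_le one_pos (hdiff x).diffContOnCl
      fun v hv ↦ hFB v ?_ x).trans_eq (div_one _)
    rw [mem_ball_iff_norm] at hw
    rw [mem_sphere_iff_norm] at hv
    linarith [norm_le_norm_add_norm_sub' w c, norm_le_norm_add_norm_sub' v w]
  have hmeas' : AEStronglyMeasurable (fun x ↦ deriv (F · x) c) μ :=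
    aestronglyMeasurable_of_tendsto_ae (𝓝[≠] 0)
      (fun h ↦ ((hmeas (c + h)).sub (hmeas c)).const_smul h⁻¹)
      (.of_forall fun x ↦ (hdiff x c).hasDerivAt.tendsto_slope_zero)
  have hint : Integrable (F c) μ :=
    hB.mono' (hmeas c) (.of_forall fun x ↦ hFB c (by linarith) x)
  exact (hasDerivAt_integral_of_dominated_loc_of_deriv_le (Metric.ball_mem_nhds c one_pos)
    (.of_forall hmeas) hint hmeas' (.of_forall hderiv) hB
    (.of_forall fun x w _ ↦ (hdiff x w).hasDerivAt)).2.differentiableAt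

lemma tendsto_smul_integral_comp_mul_smul [CompleteSpace E] {k : ℝ → ℂ} (hk : Integrable k)
    {g : ℝ → E} (hg : Continuous g) {C : ℝ} (hC : ∀ t, ‖g t‖ ≤ C) :
    Tendsto (fun r : ℝ ↦ r • ∫ t, k (r * t) • g t) atTop (𝓝 ((∫ t, k t) • g 0)) := by
  have hlim : Tendsto (fun r : ℝ ↦ ∫ u, k u • g (r⁻¹ * u)) atTop (𝓝 (∫ u, k u • g 0)) := by
    refine tendsto_integral_filter_of_dominated_convergence (fun u ↦ ‖k u‖ * C)
      (.of_forall fun r ↦ hk.aestronglyMeasurable.smul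
        (Continuous.aestronglyMeasurable (by fun_prop)))
      (.of_forall fun r ↦ .of_forall fun u ↦ ?_) (hk.norm.mul_const C) (.of_forall fun u ↦ ?_)
    · rw [norm_smul]
      gcongr
      exact hC _
    · have harg : Tendsto (fun r : ℝ ↦ r⁻¹ * u) atTop (𝓝 0) := by
        simpa using tendsto_inv_atTop_zero.mul_const u
      exact ((hg.tendsto 0).comp harg).const_smul (k u)
  rw [integral_smul_const] at hlim
  refine hlim.congr' ?_
  filter_upwards [eventually_gt_atTop 0] with r hr
  have hsubst := Measure.integral_comp_mul_left (fun u ↦ k u • g (r⁻¹ * u)) r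
  simp only [inv_mul_cancel_left₀ hr.ne'] at hsubst
  rw [hsubst, abs_of_pos (inv_pos.2 hr), smul_inv_smul₀ hr.ne']

end ParametricIntegrals

section GaussianKernel

/-- The unnormalised Gaussian kernel with complex centre `z`, which `smear` integrates against an
orbit. -/
def gaussianKernel (r : ℝ) (z : ℂ) (t : ℝ) : ℂ := cexp (-(r : ℂ) ^ 2 * ((t : ℂ) - z) ^ 2)

lemma continuous_gaussianKernel (r : ℝ) (z : ℂ) : Continuous (gaussianKernel r z) := by
  unfold gaussianKernel
  fun_prop

lemma differentiable_gaussianKernel (r t : ℝ) : Differentiable ℂ fun z ↦ gaussianKernel r z t := by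
  unfold gaussianKernel
  fun_prop

lemma gaussianKernel_ofReal (r s t : ℝ) :
    gaussianKernel r s t = gaussianKernel r 0 (t - s) := by
  simp [gaussianKernel]

lemma gaussianKernel_one_zero_mul (r t : ℝ) :
    gaussianKernel 1 0 (r * t) = gaussianKernel r 0 t := by
  simp [gaussianKernel, mul_pow]

lemma norm_gaussianKernel_le (r : ℝ) (z : ℂ) (t : ℝ) :
    ‖gaussianKernel r z t‖ ≤ Real.exp (r ^ 2 * ‖z‖ ^ 2) * Real.exp (-(r ^ 2 / 2) * t ^ 2) := by
  have hre : (-(r : ℂ) ^ 2 * ((t : ℂ) - z) ^ 2).re = -r ^ 2 * ((t - z.re) ^ 2 - z.im ^ 2) := by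
    simp [pow_two]
  have hnorm : ‖z‖ ^ 2 = z.re ^ 2 + z.im ^ 2 := by rw [Complex.sq_norm, normSq_apply]; ring
  rw [gaussianKernel, norm_exp, ← Real.exp_add, hre, hnorm]
  gcongr
  linarith [mul_nonneg (sq_nonneg r) (sq_nonneg (t - 2 * z.re))]

lemma integrable_gaussianKernel {r : ℝ} (hr : r ≠ 0) (z : ℂ) : Integrable (gaussianKernel r z) :=
  ((integrable_exp_neg_mul_sq (by positivity)).const_mul _).mono'
    (continuous_gaussianKernel r z).aestronglyMeasurable
    (.of_forall fun t ↦ norm_gaussianKernel_le r z t)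

lemma integral_gaussianKernel_one_zero : ∫ t, gaussianKernel 1 0 t = (√Real.pi : ℝ) := by
  have hgauss : ∫ t : ℝ, Real.exp (-t ^ 2) = √Real.pi := by simpa using integral_gaussian 1
  rw [← hgauss, ← integral_complex_ofReal]
  simp [gaussianKernel]

end GaussianKernel

section Smearing

variable {E : Type*} [NormedAddCommGroup E] [NormedSpace ℂ E] {α : ℝ → E →L[ℂ] E}

namespace IsOneParamRep

variable {k : ℝ → ℂ} {r : ℝ}

lemma integrable_smul_apply (hα : IsOneParamRep α) (hk : Integrable k) (a : E) :
    Integrable fun t ↦ k t • α t a := by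
  refine (hk.norm.mul_const ‖a‖).mono'
    (hk.aestronglyMeasurable.smul (hα.strong_cont a).aestronglyMeasurable) (.of_forall fun t ↦ ?_)
  rw [norm_smul]
  gcongr
  exact hα.norm_apply_le t a

/-- The integrated form of the representation, `a ↦ ∫ k(t) α_t a dt`, as a bounded operator. -/
def integratedForm (hα : IsOneParamRep α) (hk : Integrable k) : E →L[ℂ] E :=
  LinearMap.mkContinuous
    { toFun a := ∫ t, k t • α t a
      map_add' a b := by
        simp only [_root_.map_add, smul_add]
        exact integral_add (hα.integrable_smul_apply hk a) (hα.integrable_smul_apply hk b)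
      map_smul' c a := by
        simp_rw [map_smul, smul_comm (k _) c, integral_smul, RingHom.id_apply] }
    (∫ t, ‖k t‖) fun a ↦ by
      rw [← integral_mul_const]
      refine norm_integral_le_of_norm_le (hk.norm.mul_const _) (.of_forall fun t ↦ ?_)
      rw [norm_smul]
      gcongr
      exact hα.norm_apply_le t a

lemma integratedForm_apply (hα : IsOneParamRep α) (hk : Integrable k) (a : E) :
    hα.integratedForm hk a = ∫ t, k t • α t a := rfl

lemma apply_integratedForm [CompleteSpace E] (hα : IsOneParamRep α) (hk : Integrable k) (s : ℝ)
    (a : E) : α s (hα.integratedForm hk a) = ∫ t, k t • α s (α t a) := by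
  rw [integratedForm_apply,
    ← ContinuousLinearMap.integral_comp_comm _ (hα.integrable_smul_apply hk a)]
  simp only [map_smul]

lemma integratedForm_apply_comm [CompleteSpace E] (hα : IsOneParamRep α) (hk : Integrable k)
    (s : ℝ) (a : E) : hα.integratedForm hk (α s a) = α s (hα.integratedForm hk a) := by
  rw [apply_integratedForm, integratedForm_apply]
  simp only [hα.apply_comm s]

lemma integral_comp_sub_smul_apply [CompleteSpace E] (hα : IsOneParamRep α) (hk : Integrable k)
    (s : ℝ) (a : E) : ∫ t, k (t - s) • α t a = α s (hα.integratedForm hk a) := by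
  rw [apply_integratedForm, ← integral_sub_right_eq_self (fun t ↦ k t • α s (α t a)) s]
  simp only [← hα.map_add_apply, add_sub_cancel]

/-- `a ↦ smear α a r z` as a bounded operator. -/
def smearCLM (hα : IsOneParamRep α) (hr : r ≠ 0) (z : ℂ) : E →L[ℂ] E :=
  ((r / √Real.pi : ℝ) : ℂ) • hα.integratedForm (integrable_gaussianKernel hr z)

lemma smearCLM_apply (hα : IsOneParamRep α) (hr : r ≠ 0) (z : ℂ) (a : E) :
    hα.smearCLM hr z a = smear α a r z := rfl

lemma smear_apply [CompleteSpace E] (hα : IsOneParamRep α) (hr : r ≠ 0) (z : ℂ) (s : ℝ) (a : E) :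
    smear α (α s a) r z = α s (smear α a r z) := by
  simp only [← hα.smearCLM_apply hr, smearCLM, smul_apply, map_smul,
    integratedForm_apply_comm]

lemma smear_ofReal [CompleteSpace E] (hα : IsOneParamRep α) (hr : r ≠ 0) (s : ℝ) (a : E) :
    smear α a r s = α s (smear α a r 0) := by
  simp only [← hα.smearCLM_apply hr, smearCLM, smul_apply, map_smul,
    integratedForm_apply _ (integrable_gaussianKernel hr s), gaussianKernel_ofReal,
    hα.integral_comp_sub_smul_apply (integrable_gaussianKernel hr 0)]

lemma differentiable_smear (hα : IsOneParamRep α) (hr : r ≠ 0) (a : E) :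
    Differentiable ℂ (smear α a r) := by
  refine .const_smul (differentiable_integral_of_norm_le_on_closedBall
    (fun w ↦ (hα.integrable_smul_apply (integrable_gaussianKernel hr w) a).aestronglyMeasurable)
    (fun t ↦ (differentiable_gaussianKernel r t).smul_const (α t a)) fun R ↦ ?_) _
  refine ⟨fun t ↦ Real.exp (r ^ 2 * R ^ 2) * Real.exp (-(r ^ 2 / 2) * t ^ 2) * ‖a‖,
    ((integrable_exp_neg_mul_sq (by positivity)).const_mul _).mul_const _, fun w hw t ↦ ?_⟩
  rw [norm_smul]
  refine mul_le_mul ((norm_gaussianKernel_le r w t).trans ?_) (hα.norm_apply_le t a)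
    (norm_nonneg _) (by positivity)
  gcongr

lemma tendsto_smear [CompleteSpace E] (hα : IsOneParamRep α) (a : E) :
    Tendsto (fun r : ℝ ↦ smear α a r 0) atTop (𝓝 a) := by
  have hpi : ((√Real.pi : ℝ) : ℂ) ≠ 0 := ofReal_ne_zero.2 (Real.sqrt_pos.2 Real.pi_pos).ne'
  have hlim := (tendsto_smul_integral_comp_mul_smul (integrable_gaussianKernel one_ne_zero 0)
    (hα.strong_cont a) fun t ↦ hα.norm_apply_le t a).const_smul ((√Real.pi : ℝ) : ℂ)⁻¹
  simp only [integral_gaussianKernel_one_zero, gaussianKernel_one_zero_mul, inv_smul_smul₀ hpi,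
    hα.map_zero, ContinuousLinearMap.id_apply] at hlim
  refine hlim.congr fun r ↦ ?_
  rw [← coe_smul, smul_smul, inv_mul_eq_div, ← ofReal_div]
  rfl

lemma extendsOrbit_smear [CompleteSpace E] (hα : IsOneParamRep α) (hr : r ≠ 0) (z : ℂ) (a : E) :
    ExtendsOrbit α z (smear α a r 0) (smear α a r) where
  continuousOn := (hα.differentiable_smear hr a).continuous.continuousOn
  differentiableOn := (hα.differentiable_smear hr a).differentiableOn
  apply_ofReal s := hα.smear_ofReal hr s a

lemma hasContVal_smear [CompleteSpace E] (hα : IsOneParamRep α) (hr : r ≠ 0) (z : ℂ) (a : E) :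
    HasContVal α z (smear α a r 0) (smear α a r z) :=
  hasContVal_iff.2 ⟨_, hα.extendsOrbit_smear hr z a, rfl⟩

end IsOneParamRep

lemma HasContVal.smear [CompleteSpace E] (hα : IsOneParamRep α) {z : ℂ} {a b : E} {r : ℝ}
    (hr : r ≠ 0) (h : HasContVal α z a b) :
    HasContVal α z (smear α a r 0) (smear α b r 0) := by
  obtain ⟨f, hf, rfl⟩ := hasContVal_iff.1 h
  refine hasContVal_iff.2 ⟨_, ⟨hf.clm_comp (hα.smearCLM hr 0), fun t ↦ ?_⟩, rfl⟩
  rw [hf.apply_ofReal, hα.smearCLM_apply, hα.smear_apply hr]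

end Smearing

/-- If `K ⊆ E` is dense and `R ⊆ (0,∞)` has `∞` as a limit point, then the span of the
smeared elements `{a(r) : a ∈ K, r ∈ R}` is a core for `α_z`: the closure of the graph of
`α_z` restricted to this span is the whole graph of `α_z`. -/
theorem smeared_core
    {E : Type*} [NormedAddCommGroup E] [NormedSpace ℂ E] [CompleteSpace E]
    {α : ℝ → E →L[ℂ] E} (hα : IsOneParamRep α)
    (K : Set E) (hK : Dense K)
    (R : Set ℝ) (hRpos : R ⊆ Set.Ioi (0 : ℝ)) (hRinf : ∀ M : ℝ, ∃ r ∈ R, M < r)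
    (z : ℂ) :
    closure {p : E × E |
        p.1 ∈ (Submodule.span ℂ {x : E | ∃ a ∈ K, ∃ r ∈ R, x = smear α a r 0} : Set E) ∧
        HasContVal α z p.1 p.2}
      = {p : E × E | HasContVal α z p.1 p.2} := by
  refine Subset.antisymm (closure_minimal (fun p hp ↦ hp.2) (hα.isClosed_setOf_hasContVal z)) ?_
  rintro ⟨a, b⟩ hab
  have hlim : Tendsto (fun r ↦ (smear α a r 0, smear α b r 0)) atTop (𝓝 (a, b)) :=
    (hα.tendsto_smear a).prodMk_nhds (hα.tendsto_smear b)
  have hfreq : ∃ᶠ r in atTop, r ∈ R := frequently_atTop.2 fun M ↦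
    let ⟨r, hrR, hMr⟩ := hRinf M
    ⟨r, hMr.le, hrR⟩
  refine isClosed_closure.mem_of_frequently_of_tendsto (hfreq.mono fun r hrR ↦ ?_) hlim
  have hr : r ≠ 0 := (hRpos hrR).ne'
  have hsmear : smear α b r 0 = smear α a r z :=
    (HasContVal.smear hα hr hab).unique (hα.hasContVal_smear hr z a)
  rw [hsmear]
  exact map_mem_closure (f := fun x ↦ (smear α x r 0, smear α x r z)) ((hα.smearCLM hr 0).prod
    (hα.smearCLM hr z)).continuous (hK a) fun c hc ↦
      ⟨Submodule.subset_span ⟨c, hc, r, hrR, rfl⟩, hα.hasContVal_smear hr z c⟩
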